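/- Let f(z) = \sum_{k=0}^\infty a_k z^k, with a_k > 0 for all k, be an entire function. Then the inequality q_n(f) \ge 4 holds for all n \ge 2 if and only if both of the following hold: (i) all zeros of f are real, simple and negative, and (ii) for every pair of integers 0 \le m < n, all zeros of the polynomial \sum_{k=m}^{n} a_k z^k (formed by taking any number of consecutive terms of f) are real and non-positive. -/

import Mathlib

/-- The second quotients of Taylor coefficients: `q n = a_{n-1}^2 / (a_{n-2} a_n)`. -/
noncomputable def secondQuotient (a : ℕ → ℝ) (n : ℕ) : ℝ := (a (n - 1)) ^ 2 / (a (n - 2) * a n)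

/-!
Put `s_k = a_k / (2 a_{k+1})`. The inequalities `q_n ≥ 4` say that `s_{k+1} ≥ 4 s_k`, so at
`z = -s_k` the moduli of the terms `a_i z^i` at least double up to the index `k` and at least halve
from there on. The sign at `-s_k` of every partial sum of degree at least `k` is therefore `(-1)^k`,
which puts a zero `-r_j` with `s_j < r_j < s_{j+1}` into each gap; by degree these are all the
zeros, so the partial sum is `a_0 ∏ (1 + z / r_j)`. As `∑ 1 / s_j` converges, a compactness argument
passes this factorization on to `f`, now with `s_j ≤ r_j ≤ s_{j+1}`. The partial sums at `-s_k` stay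
bounded away from zero, so `f(-s_k) ≠ 0`, these inequalities are strict, and the zeros of `f` are
simple. In degree two, where the sign may degenerate to zero, and for the converse one uses the
discriminant `a_{k+1}^2 - 4 a_k a_{k+2}` of `a_k + a_{k+1} z + a_{k+2} z^2`.
-/

open Filter Finset Function Topology

section AlternatingSum

lemma neg_one_pow_mul_alternating_sum_add {R : Type*} [CommRing R] (c : ℕ → R) (k n : ℕ) :
    (-1) ^ k * ∑ i ∈ range (k + n), (-1) ^ i * c i =
      (-1) ^ k * ∑ i ∈ range k, (-1) ^ i * c i + ∑ i ∈ range n, (-1) ^ i * c (k + i) := by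
  have hsq : ((-1) ^ k * (-1) ^ k : R) = 1 := by simp [← mul_pow]
  rw [sum_range_add, mul_add, mul_sum (range n)]
  congr! 2 with i
  linear_combination (-1) ^ i * c (k + i) * hsq

lemma neg_one_pow_mul_alternating_sum_succ {R : Type*} [CommRing R] (c : ℕ → R) (k : ℕ) :
    (-1) ^ (k + 1) * ∑ i ∈ range (k + 1), (-1) ^ i * c i =
      -((-1) ^ k * ∑ i ∈ range k, (-1) ^ i * c i + c k) := by
  have h := neg_one_pow_mul_alternating_sum_add c k 1
  simp only [range_one, sum_singleton, pow_zero, one_mul, add_zero] at h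
  rw [pow_succ, mul_neg_one, neg_mul, h]

lemma alternating_sum_succ {R : Type*} [Ring R] (d : ℕ → R) (n : ℕ) :
    ∑ i ∈ range (n + 1), (-1) ^ i * d i = d 0 - ∑ i ∈ range n, (-1) ^ i * d (i + 1) := by
  simp [sum_range_succ', pow_succ, sub_eq_neg_add]

variable {R : Type*} [Field R] [LinearOrder R] [IsStrictOrderedRing R] {c d : ℕ → R} {k N : ℕ}

lemma neg_one_pow_mul_alternating_sum_mem_Icc (h0 : 0 ≤ c 0)
    (hup : ∀ i < k, 2 * c i ≤ c (i + 1)) :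
    (-1) ^ k * ∑ i ∈ range k, (-1) ^ i * c i ∈ Set.Icc (-(c k / 2)) 0 := by
  induction k with
  | zero => simpa using div_nonneg h0 two_pos.le
  | succ k ih =>
    obtain ⟨hlo, hhi⟩ := ih fun i hi ↦ hup i (by lia)
    rw [neg_one_pow_mul_alternating_sum_succ]
    constructor <;> linarith [hup k k.lt_succ_self]

lemma neg_half_lt_neg_one_pow_mul_alternating_sum (hpos : ∀ i, 0 < c i)
    (hup : ∀ i < k, 2 * c i ≤ c (i + 1)) (hk : k ≠ 1) :
    -(c k / 2) < (-1) ^ k * ∑ i ∈ range k, (-1) ^ i * c i := by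
  match k, hk with
  | 0, _ => simpa using hpos 0
  | k + 2, _ =>
    have hlo := (neg_one_pow_mul_alternating_sum_mem_Icc (k := k) (hpos 0).le
      fun i hi ↦ hup i (by lia)).1
    rw [neg_one_pow_mul_alternating_sum_succ, neg_one_pow_mul_alternating_sum_succ]
    linarith [hpos k, hup (k + 1) (by lia)]

lemma alternating_sum_mem_Icc (h0 : ∀ i, 0 ≤ d i) (hdown : ∀ i, 2 * d (i + 1) ≤ d i) (n : ℕ) :
    ∑ i ∈ range (n + 1), (-1) ^ i * d i ∈ Set.Icc (d 0 / 2) (d 0) := by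
  induction n generalizing d with
  | zero => simpa using h0 0
  | succ n ih =>
    obtain ⟨hlo, hhi⟩ := ih (fun i ↦ h0 (i + 1)) fun i ↦ hdown (i + 1)
    rw [alternating_sum_succ]
    constructor <;> linarith [hdown 0, h0 1]

lemma half_add_half_le_alternating_sum (h0 : ∀ i, 0 ≤ d i) (hdown : ∀ i, 2 * d (i + 1) ≤ d i)
    (n : ℕ) : d 0 / 2 + d 2 / 2 ≤ ∑ i ∈ range (n + 3), (-1) ^ i * d i := by
  have htail :=
    (alternating_sum_mem_Icc (fun i ↦ h0 (i + 2)) (fun i ↦ hdown (i + 2)) n).1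
  rw [alternating_sum_succ, alternating_sum_succ]
  linarith [hdown 0]

lemma half_le_alternating_sum_of_peak (h0 : ∀ i, 0 ≤ c i)
    (hup : ∀ i < k, 2 * c i ≤ c (i + 1)) (hdown : ∀ i, k ≤ i → 2 * c (i + 1) ≤ c i)
    (hN : k + 2 ≤ N) :
    c (k + 2) / 2 ≤ (-1) ^ k * ∑ i ∈ range (N + 1), (-1) ^ i * c i := by
  obtain ⟨n, rfl⟩ := Nat.exists_eq_add_of_le hN
  have hlow := (neg_one_pow_mul_alternating_sum_mem_Icc (h0 0) hup).1
  have hhigh := half_add_half_le_alternating_sum (fun i ↦ h0 (k + i))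
    (fun i ↦ hdown (k + i) (by lia)) n
  rw [show k + 2 + n + 1 = k + (n + 3) by ring, neg_one_pow_mul_alternating_sum_add]
  simp only [add_zero] at hhigh
  linarith

/- For `N = 2` this fails at `k = 1`: the sum is then `-(c 0 - c 1 + c 2)`, which vanishes when
`c 1 = 2 * c 0 = 2 * c 2`. -/
lemma alternating_sum_pos_of_peak (hpos : ∀ i, 0 < c i)
    (hup : ∀ i < k, 2 * c i ≤ c (i + 1)) (hdown : ∀ i, k ≤ i → 2 * c (i + 1) ≤ c i)
    (hkN : k ≤ N) (hN : N ≠ 2) :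
    0 < (-1) ^ k * ∑ i ∈ range (N + 1), (-1) ^ i * c i := by
  obtain h | rfl | rfl : k + 2 ≤ N ∨ N = k + 1 ∨ N = k := by lia
  · exact (half_pos (hpos _)).trans_le
      (half_le_alternating_sum_of_peak (fun i ↦ (hpos i).le) hup hdown h)
  · have hlow := neg_half_lt_neg_one_pow_mul_alternating_sum hpos hup (by lia)
    have hhigh := (alternating_sum_mem_Icc (fun i ↦ (hpos (k + i)).le)
      (fun i ↦ hdown (k + i) (by lia)) 1).1
    rw [add_assoc, neg_one_pow_mul_alternating_sum_add]
    simp only [add_zero] at hhigh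
    linarith
  · have hlow := (neg_one_pow_mul_alternating_sum_mem_Icc (hpos 0).le hup).1
    rw [neg_one_pow_mul_alternating_sum_add]
    simp only [range_one, sum_singleton, pow_zero, one_mul, add_zero]
    linarith [hpos N]

end AlternatingSum

section Polynomial

lemma eq_neg_of_one_add_inv_mul_eq_zero {K : Type*} [Field K] {x z : K} (h : 1 + x⁻¹ * z = 0) :
    z = -x := by
  obtain rfl | hx := eq_or_ne x 0
  · simp at h
  · have := mul_inv_cancel₀ hx
    linear_combination x * h - z * this

lemma sum_Icc_mul_pow {R : Type*} [CommSemiring R] (c : ℕ → R) (m N : ℕ) (z : R) :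
    ∑ k ∈ Icc m (m + N), c k * z ^ k = z ^ m * ∑ i ∈ range (N + 1), c (m + i) * z ^ i := by
  rw [← Ico_add_one_right_eq_Icc, sum_Ico_eq_sum_range, add_assoc, Nat.add_sub_cancel_left, mul_sum]
  exact sum_congr rfl fun i _ ↦ by ring

open Polynomial in
lemma eq_C_eval_zero_mul_prod_of_isRoot {K : Type*} [Field K] {p : K[X]} {s : Finset K}
    (hp : p.natDegree ≤ #s) (h0 : 0 ∉ s) (hs : ∀ x ∈ s, p.IsRoot x) :
    p = C (p.eval 0) * ∏ x ∈ s, (1 - C x⁻¹ * X) := by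
  classical
  have hcard : #s < #(insert 0 s) := by rw [card_insert_of_notMem h0]; exact Nat.lt_succ_self _
  refine eq_of_degrees_lt_of_eval_finset_eq (insert 0 s) ?_ ?_ fun x hx ↦ ?_
  · exact (natDegree_le_iff_degree_le.1 hp).trans_lt (by exact_mod_cast hcard)
  · have hfactor (x : K) : (1 - C x⁻¹ * X).natDegree ≤ 1 := by compute_degree
    have hdeg : (∏ x ∈ s, (1 - C x⁻¹ * X)).natDegree ≤ #s := by
      simpa using (natDegree_prod_le _ _).trans (sum_le_card_nsmul s _ 1 fun x _ ↦ hfactor x)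
    exact (natDegree_le_iff_degree_le.1 ((natDegree_C_mul_le _ _).trans hdeg)).trans_lt
      (by exact_mod_cast hcard)
  · obtain rfl | hx := mem_insert.1 hx
    · simp [eval_prod]
    · have hx0 : x ≠ 0 := ne_of_mem_of_not_mem hx h0
      rw [hs x hx, eval_mul, eval_prod, prod_eq_zero hx (by simp [hx0]), mul_zero]

lemma sum_mul_pow_eq_mul_prod {K : Type*} [Field K] {N : ℕ} {b r : ℕ → K}
    (hinj : Set.InjOn r (range N)) (h0 : ∀ j ∈ range N, r j ≠ 0)
    (hr : ∀ j ∈ range N, ∑ i ∈ range (N + 1), b i * (-r j) ^ i = 0) (z : K) :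
    ∑ i ∈ range (N + 1), b i * z ^ i = b 0 * ∏ j ∈ range N, (1 + (r j)⁻¹ * z) := by
  classical
  let p : Polynomial K := ∑ i ∈ range (N + 1), .C (b i) * .X ^ i
  have heval (w : K) : p.eval w = ∑ i ∈ range (N + 1), b i * w ^ i := by
    simp [p, Polynomial.eval_finsetSum]
  have hneg : Set.InjOn (fun j ↦ -r j) (range N) := neg_injective.comp_injOn hinj
  have hp : p.natDegree ≤ #((range N).image fun j ↦ -r j) := by
    rw [card_image_of_injOn hneg, card_range]
    exact Polynomial.natDegree_sum_le_of_forall_le _ _ fun i hi ↦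
      (Polynomial.natDegree_C_mul_X_pow_le _ _).trans (Nat.lt_succ_iff.1 (mem_range.1 hi))
  have hfactor := eq_C_eval_zero_mul_prod_of_isRoot hp (by simpa using h0) (by
    simpa only [forall_mem_image, Polynomial.IsRoot.def, heval] using hr)
  rw [← heval z, hfactor, prod_image hneg]
  simp [heval, Polynomial.eval_prod, sum_range_succ', inv_neg]

lemma forall_quadratic_root_im_eq_zero_iff {a b c : ℝ} (ha : a ≠ 0) :
    (∀ z : ℂ, a * (z * z) + b * z + c = 0 → z.im = 0) ↔ 0 ≤ discrim a b c := by
  have haC : (a : ℂ) ≠ 0 := mod_cast ha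
  have hcast : discrim (a : ℂ) b c = (discrim a b c : ℝ) := by simp [discrim]
  constructor
  · intro h
    by_contra! hneg
    let s := √(-discrim a b c)
    have hs : discrim (a : ℂ) b c = (s * Complex.I) * (s * Complex.I) := by
      have hsq : s * s = -discrim a b c := Real.mul_self_sqrt (by linarith)
      rw [hcast, mul_mul_mul_comm, Complex.I_mul_I, ← Complex.ofReal_mul, hsq]
      simp
    have hroot := h _ ((quadratic_eq_zero_iff haC hs _).2 (.inl rfl))
    rw [← Complex.ofReal_ofNat, ← Complex.ofReal_mul, Complex.div_ofReal_im] at hroot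
    have hs0 : s ≠ 0 := (Real.sqrt_pos.2 (neg_pos.2 hneg)).ne'
    simp [ha, hs0] at hroot
  · intro hdisc z hz
    have hs : discrim (a : ℂ) b c = (√(discrim a b c) : ℂ) * √(discrim a b c) := by
      rw [hcast, ← Complex.ofReal_mul, Real.mul_self_sqrt hdisc]
    obtain rfl | rfl := (quadratic_eq_zero_iff haC hs z).1 hz <;> norm_cast

lemma re_neg_of_sum_eq_zero {b : ℕ → ℝ} (hb : ∀ k, 0 < b k) {N : ℕ} {z : ℂ} (him : z.im = 0)
    (hz : ∑ i ∈ range (N + 1), (b i : ℂ) * z ^ i = 0) : z.re < 0 := by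
  lift z to ℝ using him
  by_contra! hre
  have hzero : ∑ i ∈ range (N + 1), b i * z ^ i = 0 := mod_cast hz
  have hpos : 0 < ∑ i ∈ range (N + 1), b i * z ^ i := by
    rw [sum_range_succ']
    exact add_pos_of_nonneg_of_pos
      (sum_nonneg fun i _ ↦ mul_nonneg (hb _).le (pow_nonneg hre _)) (by simpa using hb 0)
  exact hpos.ne' hzero

end Polynomial

section CanonicalProduct

variable {ι 𝕜 : Type*} [NormedField 𝕜]

/-- The canonical product of genus zero `∏ⱼ (1 + xⱼ z)`. It is parametrized by the negated
reciprocals `xⱼ` of its zeros, so that a factor is removed by setting `xⱼ = 0` and finite products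
are included. -/
noncomputable def canonicalProduct (x : ι → 𝕜) (z : 𝕜) : 𝕜 := ∏' j, (1 + x j * z)

lemma canonicalProduct_indicator (s : Finset ι) (x : ι → 𝕜) (z : 𝕜) :
    canonicalProduct (Set.indicator s x) z = ∏ j ∈ s, (1 + x j * z) := by
  rw [canonicalProduct, tprod_eq_prod (s := s) fun j hj ↦ by simp [hj]]
  exact prod_congr rfl fun j hj ↦ by simp [hj]

variable {x : ι → 𝕜}

lemma summable_norm_mul_right (hx : Summable (‖x ·‖)) (z : 𝕜) : Summable fun j ↦ ‖x j * z‖ := by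
  simpa only [norm_mul] using hx.mul_right ‖z‖

lemma summable_norm_update_zero [DecidableEq ι] (hx : Summable (‖x ·‖)) (j : ι) :
    Summable (‖update x j 0 ·‖) := by
  refine hx.of_nonneg_of_le (fun _ ↦ norm_nonneg _) fun i ↦ ?_
  obtain rfl | hij := eq_or_ne i j
  · simp
  · simp [hij]

variable [CompleteSpace 𝕜]

lemma exists_eq_zero_of_canonicalProduct_eq_zero (hx : Summable (‖x ·‖)) {z : 𝕜}
    (hz : canonicalProduct x z = 0) : ∃ j, 1 + x j * z = 0 := by
  contrapose! hz
  exact tprod_one_add_ne_zero_of_summable hz (summable_norm_mul_right hx z)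

lemma tendsto_canonicalProduct {α : Type*} {l : Filter α} {y : α → ι → 𝕜} {w : α → 𝕜} {z : 𝕜}
    {u : ι → ℝ} (hu : Summable u) (hyu : ∀ a j, ‖y a j‖ ≤ u j)
    (hy : ∀ j, Tendsto (y · j) l (𝓝 (x j))) (hw : Tendsto w l (𝓝 z)) :
    Tendsto (fun a ↦ canonicalProduct (y a) (w a)) l (𝓝 (canonicalProduct x z)) := by
  refine tendsto_tprod_one_add_of_dominated_convergence (hu.mul_right (‖z‖ + 1))
    (fun j ↦ (hy j).mul hw) ?_
  filter_upwards [hw.norm.eventually_le_const (lt_add_one ‖z‖)] with a ha j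
  rw [norm_mul]
  gcongr
  · exact (norm_nonneg _).trans (hyu a j)
  · exact hyu a j

lemma continuous_canonicalProduct (hx : Summable (‖x ·‖)) : Continuous (canonicalProduct x) :=
  continuous_iff_continuousAt.2 fun _ ↦
    tendsto_canonicalProduct hx (fun _ _ ↦ le_rfl) (fun _ ↦ tendsto_const_nhds) tendsto_id

lemma canonicalProduct_eq_mul_update [DecidableEq ι] (hx : Summable (‖x ·‖)) (j : ι) (z : 𝕜) :
    canonicalProduct x z = (1 + x j * z) * canonicalProduct (update x j 0) z := by
  have hfactor : update (fun i ↦ 1 + x i * z) j 1 = fun i ↦ 1 + update x j 0 i * z := by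
    ext i
    obtain rfl | hij := eq_or_ne i j <;> simp [*]
  have hmul : Multipliable (update (fun i ↦ 1 + x i * z) j 1) := by
    rw [hfactor]
    exact multipliable_one_add_of_summable
      (summable_norm_mul_right (summable_norm_update_zero hx j) z)
  rw [canonicalProduct, hmul.tprod_eq_mul_tprod_ite' j, canonicalProduct, ← hfactor]
  congr! 3 with i
  rw [update_apply]

end CanonicalProduct

section CanonicalProductZeros

variable {ι 𝕜 : Type*} [NontriviallyNormedField 𝕜] [CompleteSpace 𝕜] {x : ι → 𝕜}

lemma hasDerivAt_canonicalProduct_of_eq_zero [DecidableEq ι] (hx : Summable (‖x ·‖)) {j : ι} {z : 𝕜}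
    (hz : 1 + x j * z = 0) :
    HasDerivAt (canonicalProduct x) (x j * canonicalProduct (update x j 0) z) z := by
  have hcont := (continuous_canonicalProduct (summable_norm_update_zero hx j)).continuousAt (x := z)
  rw [hasDerivAt_iff_tendsto_slope]
  refine ((hcont.const_mul (x j)).mono_left nhdsWithin_le_nhds).congr' ?_
  filter_upwards [self_mem_nhdsWithin] with w hw
  have hwz : w - z ≠ 0 := sub_ne_zero.2 hw
  rw [slope_def_field, canonicalProduct_eq_mul_update hx j w, canonicalProduct_eq_mul_update hx j z,
    hz, zero_mul, sub_zero, eq_div_iff hwz]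
  linear_combination -canonicalProduct (update x j 0) w * hz

lemma deriv_canonicalProduct_ne_zero (hx : Summable (‖x ·‖)) (hinj : Injective x) {z : 𝕜}
    (hz : canonicalProduct x z = 0) : deriv (canonicalProduct x) z ≠ 0 := by
  classical
  obtain ⟨j, hj⟩ := exists_eq_zero_of_canonicalProduct_eq_zero hx hz
  rw [(hasDerivAt_canonicalProduct_of_eq_zero hx hj).deriv]
  have hz0 : z ≠ 0 := by rintro rfl; simp at hj
  have hxj : x j ≠ 0 := by intro h; simp [h] at hj
  refine mul_ne_zero hxj fun hrest ↦ ?_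
  obtain ⟨i, hi⟩ :=
    exists_eq_zero_of_canonicalProduct_eq_zero (summable_norm_update_zero hx j) hrest
  obtain rfl | hij := eq_or_ne i j
  · simp at hi
  · rw [update_of_ne hij] at hi
    exact hij (hinj (mul_right_cancel₀ hz0 (by linear_combination hi - hj)))

end CanonicalProductZeros

lemma exists_canonicalProduct_eq_of_tendsto {ι 𝕜 : Type*} [Countable ι] [NormedField 𝕜]
    [ProperSpace 𝕜] {y : ℕ → ι → 𝕜} {K : ι → Set 𝕜} {u : ι → ℝ} {F : 𝕜 → 𝕜} (hu : Summable u)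
    (hyu : ∀ n j, ‖y n j‖ ≤ u j) (hK : ∀ j, IsClosed (K j)) (hyK : ∀ j, ∀ᶠ n in atTop, y n j ∈ K j)
    (hF : ∀ z, Tendsto (fun n ↦ canonicalProduct (y n) z) atTop (𝓝 (F z))) :
    ∃ x : ι → 𝕜, (∀ j, x j ∈ K j) ∧ F = canonicalProduct x := by
  obtain ⟨x, -, φ, hφ, hlim⟩ :=
    (isCompact_univ_pi fun j ↦ isCompact_closedBall (0 : 𝕜) (u j)).tendsto_subseq
      fun n j _ ↦ mem_closedBall_zero_iff.2 (hyu n j)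
  rw [tendsto_pi_nhds] at hlim
  refine ⟨x, fun j ↦ (hK j).mem_of_tendsto (hlim j) (hφ.tendsto_atTop.eventually (hyK j)), ?_⟩
  ext z
  exact tendsto_nhds_unique ((hF z).comp hφ.tendsto_atTop)
    (tendsto_canonicalProduct hu (fun n ↦ hyu (φ n)) hlim tendsto_const_nhds)

lemma strictMono_of_forall_mem_Ioo {α : Type*} [Preorder α] {s r : ℕ → α}
    (hr : ∀ j, r j ∈ Set.Ioo (s j) (s (j + 1))) : StrictMono r :=
  strictMono_nat_of_lt_succ fun j ↦ (hr j).2.trans (hr (j + 1)).1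

/-- Hutchinson's condition `q_n ≥ 4` on a positive coefficient sequence, with denominators cleared
and the index shifted so that no subtraction occurs. -/
structure IsHutchinson (b : ℕ → ℝ) : Prop where
  pos : ∀ k, 0 < b k
  four_mul_le : ∀ k, 4 * (b k * b (k + 2)) ≤ b (k + 1) ^ 2

lemma isHutchinson_iff {a : ℕ → ℝ} (ha : ∀ k, 0 < a k) :
    IsHutchinson a ↔ ∀ n, 2 ≤ n → 4 ≤ secondQuotient a n := by
  have hquot (k : ℕ) : 4 ≤ secondQuotient a (k + 2) ↔ 4 * (a k * a (k + 2)) ≤ a (k + 1) ^ 2 :=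
    le_div_iff₀ (mul_pos (ha _) (ha _))
  refine ⟨fun h n hn ↦ ?_, fun h ↦ ⟨ha, fun k ↦ (hquot k).1 (h _ (by lia))⟩⟩
  obtain ⟨k, rfl⟩ := Nat.exists_eq_add_of_le' hn
  exact (hquot k).2 (h.four_mul_le k)

/-- Half the quotient of consecutive coefficients. Under Hutchinson's condition the points
`-separator b k` separate the zeros of the series, and of its partial sums of degree other than `2`.
Any point of `[2 b (k-1) / b k, b k / (2 b (k+1))]` would do; the right end also makes sense for
`k = 0`. -/
noncomputable def separator (b : ℕ → ℝ) (k : ℕ) : ℝ := b k / (2 * b (k + 1))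

namespace IsHutchinson

variable {b : ℕ → ℝ} (hb : IsHutchinson b)
include hb

lemma shift (m : ℕ) : IsHutchinson fun k ↦ b (m + k) :=
  ⟨fun _ ↦ hb.pos _, fun k ↦ hb.four_mul_le (m + k)⟩

lemma separator_pos (k : ℕ) : 0 < separator b k :=
  div_pos (hb.pos _) (mul_pos two_pos (hb.pos _))

lemma two_mul_coeff_mul_separator (k : ℕ) : 2 * (b (k + 1) * separator b k) = b k := by
  have := (hb.pos (k + 1)).ne'
  rw [separator]
  field

lemma four_mul_separator_le (k : ℕ) : 4 * separator b k ≤ separator b (k + 1) := by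
  have h1 := hb.pos (k + 1)
  have h2 := hb.pos (k + 2)
  rw [separator, separator, mul_div_assoc', div_le_div_iff₀ (by positivity) (by positivity)]
  linarith [hb.four_mul_le k]

lemma strictMono_separator : StrictMono (separator b) :=
  strictMono_nat_of_lt_succ fun k ↦ by linarith [hb.separator_pos k, hb.four_mul_separator_le k]

lemma summable_inv_separator : Summable fun k ↦ (separator b k)⁻¹ := by
  refine summable_of_ratio_norm_eventually_le (r := 1 / 4) (by norm_num) (.of_forall fun k ↦ ?_)
  have hk := hb.separator_pos k
  rw [norm_inv, norm_inv, Real.norm_of_nonneg hk.le,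
    Real.norm_of_nonneg (hb.separator_pos (k + 1)).le]
  calc (separator b (k + 1))⁻¹ ≤ (4 * separator b k)⁻¹ := by
        gcongr; exact hb.four_mul_separator_le k
    _ = 1 / 4 * (separator b k)⁻¹ := by rw [mul_inv, one_div]

lemma two_mul_term_succ_le {t : ℝ} {i : ℕ} (ht : 0 ≤ t) (h : t ≤ separator b i) :
    2 * (b (i + 1) * t ^ (i + 1)) ≤ b i * t ^ i :=
  calc 2 * (b (i + 1) * t ^ (i + 1)) = 2 * (b (i + 1) * t) * t ^ i := by ring
    _ ≤ 2 * (b (i + 1) * separator b i) * t ^ i := by gcongr; exact (hb.pos _).le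
    _ = b i * t ^ i := by rw [hb.two_mul_coeff_mul_separator]

lemma two_mul_term_le_succ {t : ℝ} {i : ℕ} (h : separator b (i + 1) ≤ t) :
    2 * (b i * t ^ i) ≤ b (i + 1) * t ^ (i + 1) := by
  have ht : 0 ≤ t := (hb.separator_pos _).le.trans h
  calc 2 * (b i * t ^ i) = b (i + 1) * (4 * separator b i) * t ^ i := by
        linear_combination (-2 * t ^ i) * hb.two_mul_coeff_mul_separator i
    _ ≤ b (i + 1) * t * t ^ i := by
        gcongr
        exacts [(hb.pos _).le, (hb.four_mul_separator_le i).trans h]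
    _ = b (i + 1) * t ^ (i + 1) := by ring

lemma term_peak (k : ℕ) : (∀ i, 0 < b i * separator b k ^ i) ∧
    (∀ i < k, 2 * (b i * separator b k ^ i) ≤ b (i + 1) * separator b k ^ (i + 1)) ∧
    ∀ i, k ≤ i → 2 * (b (i + 1) * separator b k ^ (i + 1)) ≤ b i * separator b k ^ i := by
  have hmono := hb.strictMono_separator.monotone
  exact ⟨fun i ↦ mul_pos (hb.pos i) (pow_pos (hb.separator_pos k) i),
    fun i hi ↦ hb.two_mul_term_le_succ (hmono hi),
    fun i hi ↦ hb.two_mul_term_succ_le (hb.separator_pos k).le (hmono hi)⟩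

lemma half_le_partialSum_neg_separator {k N : ℕ} (hN : k + 2 ≤ N) :
    b (k + 2) * separator b k ^ (k + 2) / 2 ≤
      (-1) ^ k * ∑ i ∈ range (N + 1), b i * (-separator b k) ^ i := by
  obtain ⟨hpos, hup, hdown⟩ := hb.term_peak k
  simpa only [neg_pow (separator b k), mul_left_comm] using
    half_le_alternating_sum_of_peak (fun i ↦ (hpos i).le) hup hdown hN

lemma partialSum_neg_separator_pos {k N : ℕ} (hkN : k ≤ N) (hN : N ≠ 2) :
    0 < (-1) ^ k * ∑ i ∈ range (N + 1), b i * (-separator b k) ^ i := by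
  obtain ⟨hpos, hup, hdown⟩ := hb.term_peak k
  simpa only [neg_pow (separator b k), mul_left_comm] using
    alternating_sum_pos_of_peak hpos hup hdown hkN hN

lemma exists_partialSum_eq_zero {j N : ℕ} (hj : j < N) (hN : N ≠ 2) :
    ∃ r ∈ Set.Ioo (separator b j) (separator b (j + 1)),
      ∑ i ∈ range (N + 1), b i * (-r) ^ i = 0 := by
  have hleft := hb.partialSum_neg_separator_pos hj.le hN
  have hright := hb.partialSum_neg_separator_pos (Nat.succ_le_of_lt hj) hN
  rw [pow_succ, mul_neg_one, neg_mul, neg_pos] at hright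
  have hcont : Continuous fun t : ℝ ↦ (-1) ^ j * ∑ i ∈ range (N + 1), b i * (-t) ^ i := by fun_prop
  obtain ⟨r, hr, hzero⟩ := intermediate_value_Ioo'
    (hb.strictMono_separator j.lt_succ_self).le hcont.continuousOn ⟨hright, hleft⟩
  exact ⟨r, hr, by simpa using hzero⟩

lemma exists_partialSum_eq_mul_prod {N : ℕ} (hN : N ≠ 2) :
    ∃ r : ℕ → ℝ, (∀ j, r j ∈ Set.Ioo (separator b j) (separator b (j + 1))) ∧
      ∀ z : ℂ, ∑ i ∈ range (N + 1), (b i : ℂ) * z ^ i =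
        b 0 * ∏ j ∈ range N, (1 + (r j : ℂ)⁻¹ * z) := by
  have hroot (j : ℕ) : ∃ r ∈ Set.Ioo (separator b j) (separator b (j + 1)),
      j < N → ∑ i ∈ range (N + 1), b i * (-r) ^ i = 0 := by
    by_cases hj : j < N
    · obtain ⟨r, hr, hzero⟩ := hb.exists_partialSum_eq_zero hj hN
      exact ⟨r, hr, fun _ ↦ hzero⟩
    · obtain ⟨r, hr⟩ := Set.nonempty_Ioo.2 (hb.strictMono_separator j.lt_succ_self)
      exact ⟨r, hr, fun h ↦ absurd h hj⟩
  choose r hr hzero using hroot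
  have hinj : Injective fun j ↦ (r j : ℂ) :=
    Complex.ofReal_injective.comp (strictMono_of_forall_mem_Ioo hr).injective
  exact ⟨r, hr, sum_mul_pow_eq_mul_prod hinj.injOn
    (fun j _ ↦ mod_cast ((hb.separator_pos j).trans (hr j).1).ne')
    fun j hj ↦ mod_cast hzero j (mem_range.1 hj)⟩

lemma im_eq_zero_and_re_neg_of_partialSum_eq_zero {N : ℕ} {z : ℂ}
    (hz : ∑ i ∈ range (N + 1), (b i : ℂ) * z ^ i = 0) : z.im = 0 ∧ z.re < 0 := by
  suffices him : z.im = 0 from ⟨him, re_neg_of_sum_eq_zero hb.pos him hz⟩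
  obtain rfl | hN := eq_or_ne N 2
  · have hdisc : 0 ≤ discrim (b 2) (b 1) (b 0) := by
      rw [discrim]; linarith [hb.four_mul_le 0]
    refine (forall_quadratic_root_im_eq_zero_iff (hb.pos 2).ne').2 hdisc z ?_
    simp only [sum_range_succ, sum_range_zero] at hz
    linear_combination hz
  · obtain ⟨r, -, hfactor⟩ := hb.exists_partialSum_eq_mul_prod hN
    have hprod := (mul_eq_zero.1 ((hfactor z).symm.trans hz)).resolve_left
      (mod_cast (hb.pos 0).ne')
    obtain ⟨j, -, hj⟩ := prod_eq_zero_iff.1 hprod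
    simp [eq_neg_of_one_add_inv_mul_eq_zero hj]

lemma norm_inv_ofReal_le {j : ℕ} {t : ℝ} (ht : separator b j ≤ t) :
    ‖(t : ℂ)⁻¹‖ ≤ (separator b j)⁻¹ := by
  have hj := hb.separator_pos j
  rw [norm_inv, Complex.norm_of_nonneg (hj.le.trans ht)]
  gcongr

variable {f : ℂ → ℂ} (hf : ∀ z : ℂ, HasSum (fun k ↦ (b k : ℂ) * z ^ k) (f z))
include hf

lemma apply_neg_separator_ne_zero (k : ℕ) : f (-separator b k) ≠ 0 := by
  intro hzero
  have hsum : HasSum (fun i ↦ b i * (-separator b k) ^ i) 0 :=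
    Complex.hasSum_ofReal.1 (by simpa [hzero] using hf (-separator b k))
  have hlim := (hsum.tendsto_sum_nat.comp (tendsto_add_atTop_nat 1)).const_mul ((-1) ^ k)
  have hle : b (k + 2) * separator b k ^ (k + 2) / 2 ≤ (-1) ^ k * 0 :=
    ge_of_tendsto hlim <| (eventually_ge_atTop (k + 2)).mono fun N hN ↦
      hb.half_le_partialSum_neg_separator hN
  have hpos := (hb.term_peak k).1 (k + 2)
  linarith

lemma exists_eq_mul_canonicalProduct_of_mem_Icc :
    ∃ r : ℕ → ℝ, (∀ j, r j ∈ Set.Icc (separator b j) (separator b (j + 1))) ∧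
      f = fun z ↦ b 0 * canonicalProduct (fun j ↦ (r j : ℂ)⁻¹) z := by
  have hb0 : (b 0 : ℂ) ≠ 0 := mod_cast (hb.pos 0).ne'
  choose r hr hfactor using fun n ↦ hb.exists_partialSum_eq_mul_prod (N := n + 3) (by lia)
  let y (n : ℕ) : ℕ → ℂ := Set.indicator (range (n + 3)) fun j ↦ (r n j : ℂ)⁻¹
  have hnorm (n j : ℕ) : ‖y n j‖ ≤ (separator b j)⁻¹ :=
    (norm_indicator_le_norm_self _ _).trans (hb.norm_inv_ofReal_le (hr n j).1.le)
  let K (j : ℕ) : Set ℂ := (fun t : ℝ ↦ (t : ℂ)⁻¹) '' Set.Icc (separator b j) (separator b (j + 1))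
  have hclosed (j : ℕ) : IsClosed (K j) := by
    refine (isCompact_Icc.image_of_continuousOn ?_).isClosed
    exact Complex.continuous_ofReal.continuousOn.inv₀ fun t ht ↦
      mod_cast ((hb.separator_pos j).trans_le ht.1).ne'
  have hmem (j : ℕ) : ∀ᶠ n in atTop, y n j ∈ K j := by
    filter_upwards [eventually_ge_atTop j] with n hn
    have hj : j ∈ range (n + 3) := mem_range.2 (by lia)
    have hy : y n j = (r n j : ℂ)⁻¹ := Set.indicator_of_mem (mem_coe.2 hj) _
    exact ⟨r n j, Set.Ioo_subset_Icc_self (hr n j), hy.symm⟩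
  have hlim (z : ℂ) : Tendsto (fun n ↦ canonicalProduct (y n) z) atTop (𝓝 (f z / b 0)) := by
    refine (((hf z).tendsto_sum_nat.comp (tendsto_add_atTop_nat 4)).div_const _).congr fun n ↦ ?_
    rw [canonicalProduct_indicator, comp_apply, hfactor n z, mul_div_cancel_left₀ _ hb0]
  obtain ⟨x, hxK, hx⟩ :=
    exists_canonicalProduct_eq_of_tendsto hb.summable_inv_separator hnorm hclosed hmem hlim
  choose t ht htx using hxK
  refine ⟨t, ht, funext fun z ↦ ?_⟩
  rw [show (fun j ↦ (t j : ℂ)⁻¹) = x from funext htx, ← congrFun hx z, mul_div_cancel₀ _ hb0]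

lemma exists_eq_mul_canonicalProduct :
    ∃ r : ℕ → ℝ, (∀ j, r j ∈ Set.Ioo (separator b j) (separator b (j + 1))) ∧
      f = fun z ↦ b 0 * canonicalProduct (fun j ↦ (r j : ℂ)⁻¹) z := by
  obtain ⟨r, hr, hfactor⟩ := hb.exists_eq_mul_canonicalProduct_of_mem_Icc hf
  have hne (j : ℕ) : (r j : ℂ) ≠ 0 := mod_cast ((hb.separator_pos j).trans_le (hr j).1).ne'
  have hroot (j : ℕ) : f (-r j) = 0 := by
    simp only [hfactor, canonicalProduct]
    rw [tprod_of_exists_eq_zero ⟨j, by simp [hne]⟩, mul_zero]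
  refine ⟨r, fun j ↦ ⟨(hr j).1.lt_of_ne fun h ↦ ?_, (hr j).2.lt_of_ne fun h ↦ ?_⟩, hfactor⟩
  · exact hb.apply_neg_separator_ne_zero hf j (h ▸ hroot j)
  · exact hb.apply_neg_separator_ne_zero hf (j + 1) (h ▸ hroot j)

lemma im_eq_zero_and_re_neg_and_deriv_ne_zero {z : ℂ} (hz : f z = 0) :
    z.im = 0 ∧ z.re < 0 ∧ deriv f z ≠ 0 := by
  obtain ⟨r, hr, rfl⟩ := hb.exists_eq_mul_canonicalProduct hf
  have hb0 : (b 0 : ℂ) ≠ 0 := mod_cast (hb.pos 0).ne'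
  have hsummable : Summable fun j ↦ ‖(r j : ℂ)⁻¹‖ :=
    hb.summable_inv_separator.of_nonneg_of_le (fun _ ↦ norm_nonneg _)
      fun j ↦ hb.norm_inv_ofReal_le (hr j).1.le
  have hinj : Injective fun j ↦ (r j : ℂ)⁻¹ :=
    inv_injective.comp (Complex.ofReal_injective.comp (strictMono_of_forall_mem_Ioo hr).injective)
  have hprod := (mul_eq_zero.1 hz).resolve_left hb0
  obtain ⟨j, hj⟩ := exists_eq_zero_of_canonicalProduct_eq_zero hsummable hprod
  refine ⟨?_, ?_, ?_⟩
  · simp [eq_neg_of_one_add_inv_mul_eq_zero hj]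
  · simpa [eq_neg_of_one_add_inv_mul_eq_zero hj] using (hb.separator_pos j).trans (hr j).1
  · rw [deriv_const_mul_field]
    exact mul_ne_zero hb0 (deriv_canonicalProduct_ne_zero hsummable hinj hprod)

end IsHutchinson

lemma IsHutchinson.of_forall_im_eq_zero {a : ℕ → ℝ} (ha : ∀ k, 0 < a k)
    (h : ∀ k, ∀ z : ℂ, ∑ i ∈ Icc k (k + 2), (a i : ℂ) * z ^ i = 0 → z.im = 0) :
    IsHutchinson a := by
  refine ⟨ha, fun k ↦ ?_⟩
  have hdisc : 0 ≤ discrim (a (k + 2)) (a (k + 1)) (a k) := by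
    refine (forall_quadratic_root_im_eq_zero_iff (ha _).ne').1 fun z hz ↦ h k z ?_
    rw [sum_Icc_mul_pow]
    simp only [sum_range_succ, sum_range_zero, add_zero]
    linear_combination z ^ k * hz
  rw [discrim] at hdisc
  linarith

theorem stmt6 (a : ℕ → ℝ) (f : ℂ → ℂ)
    (ha : ∀ k, 0 < a k)
    (hf : ∀ z : ℂ, HasSum (fun k : ℕ => (a k : ℂ) * z ^ k) (f z)) :
    (∀ n : ℕ, 2 ≤ n → 4 ≤ secondQuotient a n) ↔
      ((∀ z : ℂ, f z = 0 → z.im = 0 ∧ z.re < 0 ∧ deriv f z ≠ 0) ∧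
        (∀ m n : ℕ, m < n → ∀ z : ℂ,
          (∑ k ∈ Finset.Icc m n, (a k : ℂ) * z ^ k) = 0 → z.im = 0 ∧ z.re ≤ 0)) := by
  rw [← isHutchinson_iff ha]
  constructor
  · intro h
    refine ⟨fun z ↦ h.im_eq_zero_and_re_neg_and_deriv_ne_zero hf, fun m n hmn z hz ↦ ?_⟩
    obtain ⟨N, rfl⟩ := Nat.exists_eq_add_of_le hmn.le
    rw [sum_Icc_mul_pow, mul_eq_zero] at hz
    obtain hpow | hsum := hz
    · simp [eq_zero_of_pow_eq_zero hpow]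
    · exact ((h.shift m).im_eq_zero_and_re_neg_of_partialSum_eq_zero hsum).imp_right le_of_lt
  · rintro ⟨-, h⟩
    exact .of_forall_im_eq_zero ha fun k z hz ↦ (h k (k + 2) (by lia) z hz).1
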